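/- Let Λ ⊆ D_F be a non-degenerate O_F-lattice and for t ∈ T_F set Θ(t, Λ) := Σ_{λ ∈ Λ} f(tλ). Then for every t ∈ T_F one has Θ(t, Λ) = V(Λ)^{−1} · |N(t)|^{−2} · Θ(t^{−1}, Λ*). -/

import Mathlib

/-!
The transformation formula is Poisson summation for the lattice `Λ` applied to `z ↦ f(t z)`,
combined with the fact that `f` is its own Fourier transform.

* `fourier_fD`: for the pairing `⟨z, w⟩ = Tr(x-coordinate of z w)`, for which
  `ψ(z w) = exp(2πi ⟨z, w⟩)`, the Fourier transform of `z ↦ f(t z)` is `|N(t)|⁻² f(t⁻¹ w)`. The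
  integral splits over the infinite places into Gaussian integrals on `ℂ` (`gaussC`) and on `ℍ`
  (`gaussH`); the weights `n_v` in `f` and the factor `4` in the measure of `ℍ` are what makes both
  local Gaussians self-dual.
* `poisson`: Poisson summation for `ℤ^ι ⊆ ℝ^ι` and functions with Gaussian decay. The periodization
  descends to a continuous function on the torus whose Fourier coefficients are the values of the
  Fourier transform at integer points; as these are summable, the Fourier series converges to the
  function at the origin.
* `exists_basis`, `latEquiv`, `dualEquiv`, `integral_coord`: `Λ` is the ℤ-span of an ℝ-basis `b` of
  `D_F`. In coordinates, `Λ` becomes `ℤ^ι`, the dual lattice `Λ*` becomes the ℤ-span of the basis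
  dual to `b` under the (non-degenerate) pairing, and the measure of `D_F` becomes `V(Λ)` times
  Lebesgue measure, which produces the factor `V(Λ)⁻¹`.

The only properties of `Λ` that enter are that it is discrete and cocompact.
-/

noncomputable section
open NumberField MeasureTheory
open scoped nonZeroDivisors

set_option linter.unusedSectionVars false
set_option linter.unnecessarySeqFocus false

namespace Hecke

instance : MeasurableSpace (Quaternion ℝ) := borel _
instance : BorelSpace (Quaternion ℝ) := ⟨rfl⟩

/-- The Haar (Lebesgue) measure on Hamilton's quaternions `ℍ ≅ ℝ⁴`. -/
def volH : Measure (Quaternion ℝ) :=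
  Measure.map (Quaternion.linearIsometryEquivTuple.symm) volume

instance : SigmaFinite volH := by
  unfold volH
  exact (Quaternion.linearIsometryEquivTuple.symm.toHomeomorph.toMeasurableEquiv).sigmaFinite_map

noncomputable instance (F : Type) [Field F] [NumberField F] :
    Fintype {v : InfinitePlace F // v.IsReal} := by classical exact Subtype.fintype _

noncomputable instance (F : Type) [Field F] [NumberField F] :
    Fintype {v : InfinitePlace F // v.IsComplex} := by classical exact Subtype.fintype _

variable (F : Type) [Field F] [NumberField F]

/-- `F_ℝ = F ⊗_ℚ ℝ = ∏_v F_v`. -/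
abbrev RS := ({v : InfinitePlace F // v.IsReal} → ℝ) × ({v : InfinitePlace F // v.IsComplex} → ℂ)

/-- `D_F = ∏_v D_v` where `D_v = ℂ` for real `v` and `D_v = ℍ` for complex `v`. -/
abbrev DS := ({v : InfinitePlace F // v.IsReal} → ℂ) ×
  ({v : InfinitePlace F // v.IsComplex} → Quaternion ℝ)

/-- The Haar measure on `F_ℝ`: Lebesgue at real places, twice Lebesgue at complex places. -/
def measR : Measure (RS F) :=
  (Measure.pi fun _ => (volume : Measure ℝ)).prod (Measure.pi fun _ => (2 : ENNReal) • (volume : Measure ℂ))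

/-- The Haar measure on `D_F`: Lebesgue at real places, 4 times Lebesgue at complex places. -/
def measD : Measure (DS F) :=
  (Measure.pi fun _ => (volume : Measure ℂ)).prod (Measure.pi fun _ => (4 : ENNReal) • volH)

/-- `‖z‖ = ∏_{v real} |z_v| ∏_{v complex} |z_v|²` on `D_F`. -/
def normD (z : DS F) : ℝ := (∏ v, ‖z.1 v‖) * ∏ v, ‖z.2 v‖ ^ 2

/-- `|N(x)| = ∏_{v real} |x_v| ∏_{v complex} |x_v|²` on `F_ℝ`. -/
def normR (x : RS F) : ℝ := (∏ v, |x.1 v|) * ∏ v, ‖x.2 v‖ ^ 2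


/-- The structure map `F_ℝ → D_F` (componentwise `ℝ ↪ ℂ` resp. `ℂ ↪ ℍ`). -/
def structureMap : RS F →+* DS F :=
  RingHom.prod
    ((Pi.ringHom fun v => Complex.ofRealHom.comp (Pi.evalRingHom (fun _ => ℝ) v)).comp
      (RingHom.fst _ _))
    ((Pi.ringHom fun v => Quaternion.ofComplex.toRingHom.comp (Pi.evalRingHom (fun _ => ℂ) v)).comp
      (RingHom.snd _ _))

/-- The map `F → D_F`. -/
def FtoD : F →+* DS F := (structureMap F).comp (NumberField.mixedEmbedding F)

/-- The element `j_F = (j_v)_v ∈ D_F`. -/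
def jF : DS F := (fun _ => Complex.I, fun _ => ⟨0, 0, 1, 0⟩)

/-- The `x`-coordinate of `z = x + y j_F ∈ D_F` (`x ∈ F_ℝ`). -/
def projX (z : DS F) : RS F :=
  (fun v => (z.1 v).re, fun v => ⟨(z.2 v).re, (z.2 v).imI⟩)

/-- The `y`-coordinate of `z = x + y j_F ∈ D_F` (`y ∈ F_ℝ`). -/
def projY (z : DS F) : RS F :=
  (fun v => (z.1 v).im, fun v => ⟨(z.2 v).imJ, (z.2 v).imK⟩)

/-- The trace `Tr_{F/ℚ}` extended to `F_ℝ`. -/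
def TrR (x : RS F) : ℝ := (∑ v, x.1 v) + ∑ v, 2 * (x.2 v).re


/-- The character `ψ(x + y j_F) = exp(2πi Tr_{F/ℚ}(x))` on `D_F`. -/
def psiD (z : DS F) : ℂ := Complex.exp (2 * Real.pi * Complex.I * TrR F (projX F z))

lemma projX_add (z w : DS F) : projX F (z + w) = projX F z + projX F w := by
  unfold projX
  refine Prod.ext (funext fun v => ?_) (funext fun v => ?_)
  · simp
  · simp only [Prod.snd_add, Pi.add_apply, Prod.fst_add]
    exact Complex.ext (by simp) (by simp)

lemma TrR_add (x y : RS F) : TrR F (x + y) = TrR F x + TrR F y := by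
  unfold TrR
  simp [Finset.sum_add_distrib, mul_add]
  ring

lemma psiD_add (z w : DS F) : psiD F (z + w) = psiD F z * psiD F w := by
  unfold psiD
  rw [projX_add, TrR_add, ← Complex.exp_add]
  push_cast
  ring_nf

lemma psiD_zero : psiD F 0 = 1 := by
  have h0 : projX F (0 : DS F) = 0 := by
    unfold projX
    refine Prod.ext (funext fun v => ?_) (funext fun v => ?_) <;>
      simp <;> rfl
  unfold psiD
  rw [h0]
  simp [TrR]

/-- The dual lattice `Λ* = {w : ψ(λ w) = 1 for all λ ∈ Λ}`. -/
def dualLat (Λ : AddSubgroup (DS F)) : AddSubgroup (DS F) where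
  carrier := {w | ∀ l ∈ Λ, psiD F (l * w) = 1}
  zero_mem' := by
    intro l _
    rw [mul_zero, psiD_zero]
  add_mem' := by
    intro a b ha hb l hl
    rw [mul_add, psiD_add, ha l hl, hb l hl, mul_one]
  neg_mem' := by
    intro a ha l hl
    have := psiD_add F (l * a) (l * -a)
    rw [← mul_add, add_neg_cancel, mul_zero, psiD_zero, ha l hl, one_mul] at this
    exact this.symm


/-- An `O_F`-lattice in `D_F`: a discrete cocompact `O_F`-submodule. -/
def IsOFLattice (Λ : AddSubgroup (DS F)) : Prop :=
  (∀ c : 𝓞 F, ∀ z ∈ Λ, FtoD F (c : F) * z ∈ Λ) ∧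
    DiscreteTopology Λ ∧ CompactSpace (DS F ⧸ Λ)

/-- Non-degeneracy: no nonzero lattice point has `‖λ‖ = 0`. -/
def Nondeg (Λ : AddSubgroup (DS F)) : Prop :=
  ∀ l ∈ Λ, l ≠ 0 → normD F l ≠ 0

/-- `V(Λ) = V`: some fundamental domain of `Λ` in `D_F` has measure `V`. -/
def HasVol (Λ : AddSubgroup (DS F)) (V : ℝ) : Prop :=
  ∃ s : Set (DS F), IsAddFundamentalDomain Λ s (measD F) ∧ measD F s = ENNReal.ofReal V

/-- `R` is a set of representatives of the nonzero `U_F`-orbits in `Λ`. -/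
def IsRepr (Λ : AddSubgroup (DS F)) (R : Set (DS F)) : Prop :=
  (∀ r ∈ R, r ∈ Λ) ∧ (0 : DS F) ∉ R ∧
    ∀ l ∈ Λ, l ≠ 0 → ∃! r, r ∈ R ∧ ∃ ε : (𝓞 F)ˣ, FtoD F ((ε : 𝓞 F) : F) * r = l

/-- The Eisenstein series `E(Λ, s) = Σ_{λ ∈ Λ/U_F} V(Λ)^s / ‖λ‖^{2s}`, written in terms
of the covolume `V` of `Λ` and a set `R` of representatives of the nonzero `U_F`-orbits. -/
def Eis (V : ℝ) (R : Set (DS F)) (s : ℂ) : ℂ :=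
  ∑' r : R, (V : ℂ) ^ s / ((normD F (r : DS F) : ℂ)) ^ (2 * s)

/-- `T_F = F_ℝ^×`. -/
def TF : Set (RS F) := {x | IsUnit x}

/-- The multiplicative Haar measure `d^×t = ∏_v dt_v/|t_v|^{n_v}` on `F_ℝ`. -/
def measT : Measure (RS F) :=
  (measR F).withDensity fun t => ENNReal.ofReal (1 / normR F t)

/-- `f(z) = ∏_v exp(-n_v π |z_v|²)` on `D_F`. -/
def fD (z : DS F) : ℝ :=
  (∏ v, Real.exp (-(Real.pi) * ‖z.1 v‖ ^ 2)) * ∏ v, Real.exp (-(2 * Real.pi) * ‖z.2 v‖ ^ 2)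

/-- `f` restricted to `F_ℝ`. -/
def fR (x : RS F) : ℝ := fD F (structureMap F x)

/-- `Γ_F(s) = ∫_{T_F} f(t) |N(t)|^s d^×t`. -/
def GammaF (s : ℂ) : ℂ :=
  ∫ t in TF F, (fR F t : ℂ) * (normR F t : ℂ) ^ s ∂(measT F)

/-- The completed Eisenstein series `Ê(Λ, s) = Γ_F(2s) E(Λ, s)`. -/
def Ehat (V : ℝ) (R : Set (DS F)) (s : ℂ) : ℂ := GammaF F (2 * s) * Eis F V R s

/-- `D` is a (strict) fundamental domain for the multiplicative action of `U_F` on `T_F`. -/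
def IsUnitsFD (D : Set (RS F)) : Prop :=
  D ⊆ TF F ∧ ∀ t ∈ TF F, ∃! ε : (𝓞 F)ˣ,
    NumberField.mixedEmbedding F (((ε : 𝓞 F) : F)) * t ∈ D

/-- `d_F`, the absolute value of the discriminant. -/
def dF : ℕ := (NumberField.discr F).natAbs

/-- `R` is a set of representatives of the nonzero `U_F`-orbits in the fractional ideal `𝔞`. -/
def IsIdealRepr (a : FractionalIdeal (𝓞 F)⁰ F) (R : Set F) : Prop :=
  (∀ r ∈ R, r ∈ a) ∧ (0 : F) ∉ R ∧
    ∀ α ∈ a, α ≠ 0 → ∃! r, r ∈ R ∧ ∃ ε : (𝓞 F)ˣ, ((ε : 𝓞 F) : F) * r = α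

/-- The completed partial zeta function
`ξ_F(s, 𝔞) = d_F^{s/2} Γ_F(s) N(𝔞)^s Σ_{α ∈ 𝔞/U_F} |N(α)|^{-s}`, written in terms of a
set `R` of representatives of the nonzero `U_F`-orbits in `𝔞`. -/
def xiF (s : ℂ) (a : FractionalIdeal (𝓞 F)⁰ F) (R : Set F) : ℂ :=
  (dF F : ℂ) ^ (s / 2) * GammaF F s * (FractionalIdeal.absNorm a : ℂ) ^ s *
    ∑' r : R, ((|Algebra.norm ℚ (r : F)| : ℚ) : ℂ) ^ (-s)

/-- The constant `C_F = 2^{r₁} (2π)^{r₂} R_F / w_F`. -/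
def CF : ℝ :=
  2 ^ (Fintype.card {v : InfinitePlace F // v.IsReal}) *
    (2 * Real.pi) ^ (Fintype.card {v : InfinitePlace F // v.IsComplex}) *
    NumberField.Units.regulator F / (NumberField.Units.torsionOrder F : ℕ)

/-- The dual ideal `𝔟* = {x ∈ F : Tr_{F/ℚ}(βx) ∈ ℤ for all β ∈ 𝔟}`. -/
def dualIdealSet (b : FractionalIdeal (𝓞 F)⁰ F) : Set F :=
  {x | ∀ β ∈ b, ∃ n : ℤ, Algebra.trace ℚ F (β * x) = n}

/-- `B_F(a, b, s) = ∫_{T_F} f(ta) f(t⁻¹ b) |N(t)|^{2s} d^×t`. -/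
def BF (a b : RS F) (s : ℂ) : ℂ :=
  ∫ t in TF F, ((fR F (t * a) * fR F (Ring.inverse t * b) : ℝ) : ℂ) *
    (normR F t : ℂ) ^ (2 * s) ∂(measT F)

/-- The lattice `Λ = 𝔞 z + 𝔟`. -/
def latAB (a b : FractionalIdeal (𝓞 F)⁰ F) (z : DS F) : AddSubgroup (DS F) where
  carrier := {w | ∃ α ∈ a, ∃ β ∈ b, w = FtoD F α * z + FtoD F β}
  zero_mem' := ⟨0, Submodule.zero_mem _, 0, Submodule.zero_mem _, by simp⟩
  add_mem' := by
    rintro w₁ w₂ ⟨α₁, hα₁, β₁, hβ₁, rfl⟩ ⟨α₂, hα₂, β₂, hβ₂, rfl⟩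
    exact ⟨α₁ + α₂, Submodule.add_mem _ hα₁ hα₂, β₁ + β₂, Submodule.add_mem _ hβ₁ hβ₂, by
      rw [map_add, map_add, add_mul]; abel⟩
  neg_mem' := by
    rintro w ⟨α, hα, β, hβ, rfl⟩
    exact ⟨-α, Submodule.neg_mem _ hα, -β, Submodule.neg_mem _ hβ, by rw [map_neg, map_neg, neg_mul]; abel⟩

/-- `P` is a set of representatives of pairs `(α, β*) ∈ (𝔞∖{0}) × (𝔟*∖{0})` modulo
`(α, β*) ∼ (αε, β*ε⁻¹)`, `ε ∈ U_F`. -/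
def IsPairRepr (a b : FractionalIdeal (𝓞 F)⁰ F) (P : Set (F × F)) : Prop :=
  (∀ p ∈ P, p.1 ∈ a ∧ p.1 ≠ 0 ∧ p.2 ∈ dualIdealSet F b ∧ p.2 ≠ 0) ∧
    ∀ α, α ∈ a → α ≠ 0 → ∀ β, β ∈ dualIdealSet F b → β ≠ 0 →
      ∃! p, p ∈ P ∧ ∃ ε : (𝓞 F)ˣ,
        α = p.1 * ((ε : 𝓞 F) : F) ∧ β = p.2 * (((ε⁻¹ : (𝓞 F)ˣ) : 𝓞 F) : F)

/-- The function `h_F(z, 𝔞, 𝔟)`, defined through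
`(C_F/2) h_F = (N𝔞/N𝔟)|N(y)| ξ_F(2,𝔟) + V(𝔞)|N(y)| Σ e^{2πi Tr(xαβ*)} B_F(αy, β*, 1/2)`;
`Rb` is a set of representatives for `ξ_F(·, 𝔟)` and `P` one for the pair sum. -/
def hF (z : DS F) (a b : FractionalIdeal (𝓞 F)⁰ F) (Rb : Set F) (P : Set (F × F)) : ℂ :=
  (2 / CF F) *
    (((FractionalIdeal.absNorm a / FractionalIdeal.absNorm b : ℚ) : ℂ) *
        (normR F (projY F z) : ℂ) * xiF F 2 b Rb +
      ((Real.sqrt (dF F) * (FractionalIdeal.absNorm a : ℚ) * normR F (projY F z) : ℝ) : ℂ) *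
        ∑' p : P,
          Complex.exp (2 * Real.pi * Complex.I *
            (TrR F (projX F z * NumberField.mixedEmbedding F (p : F × F).1 *
              NumberField.mixedEmbedding F (p : F × F).2))) *
          BF F (projY F z * NumberField.mixedEmbedding F (p : F × F).1)
            (NumberField.mixedEmbedding F (p : F × F).2) (1 / 2))


section Quadratic

variable (K : Type) [Field K] [NumberField K] [Algebra F K]

/-- `U_{K/F} = T_{K/F} ∩ U_K`: the units `δ` of `K` with `N_{K/F}(δ) = δ · δ' = 1`,
where `x ↦ x'` is the nontrivial `F`-automorphism `τ` of `K`. -/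
def UKF (τ : K ≃ₐ[F] K) : Subgroup (𝓞 K)ˣ where
  carrier := {δ | ((δ : 𝓞 K) : K) * τ ((δ : 𝓞 K) : K) = 1}
  one_mem' := by simp
  mul_mem' := by
    intro a b ha hb
    have ha' : ((a : 𝓞 K) : K) * τ ((a : 𝓞 K) : K) = 1 := ha
    have hb' : ((b : 𝓞 K) : K) * τ ((b : 𝓞 K) : K) = 1 := hb
    show (((a * b : (𝓞 K)ˣ) : 𝓞 K) : K) * τ (((a * b : (𝓞 K)ˣ) : 𝓞 K) : K) = 1
    have hab : (((a * b : (𝓞 K)ˣ) : 𝓞 K) : K) = ((a : 𝓞 K) : K) * ((b : 𝓞 K) : K) := by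
      push_cast; ring
    rw [hab, map_mul]
    linear_combination (((b : 𝓞 K) : K) * τ ((b : 𝓞 K) : K)) * ha' + hb'
  inv_mem' := by
    intro a ha
    have ha : ((a : 𝓞 K) : K) * τ ((a : 𝓞 K) : K) = 1 := ha
    show (((a⁻¹ : (𝓞 K)ˣ) : 𝓞 K) : K) * τ (((a⁻¹ : (𝓞 K)ˣ) : 𝓞 K) : K) = 1
    have h1 : ((a : 𝓞 K) : K) * (((a⁻¹ : (𝓞 K)ˣ) : 𝓞 K) : K) = 1 := by
      rw [← map_mul, ← Units.val_mul, mul_inv_cancel, Units.val_one, map_one]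
    have h2 : τ ((a : 𝓞 K) : K) * τ (((a⁻¹ : (𝓞 K)ˣ) : 𝓞 K) : K) = 1 := by
      rw [← map_mul, h1, map_one]
    calc (((a⁻¹ : (𝓞 K)ˣ) : 𝓞 K) : K) * τ (((a⁻¹ : (𝓞 K)ˣ) : 𝓞 K) : K)
        = ((((a : 𝓞 K) : K)) * τ ((a : 𝓞 K) : K)) *
            ((((a⁻¹ : (𝓞 K)ˣ) : 𝓞 K) : K) * τ (((a⁻¹ : (𝓞 K)ˣ) : 𝓞 K) : K)) := by
          rw [ha, one_mul]
      _ = (((a : 𝓞 K) : K) * (((a⁻¹ : (𝓞 K)ˣ) : 𝓞 K) : K)) *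
            (τ ((a : 𝓞 K) : K) * τ (((a⁻¹ : (𝓞 K)ˣ) : 𝓞 K) : K)) := by ring
      _ = 1 := by rw [h1, h2, mul_one]

/-- `w_{K/F} = [U_K : U_F U_{K/F}]`. -/
def wKF (τ : K ≃ₐ[F] K) : ℕ :=
  ((Units.map (algebraMap (𝓞 F) (𝓞 K)).toMonoidHom).range ⊔ UKF F K τ).index

/-- `T_{K/F} = {u ∈ T_K : u σ(u) = 1}`, where `σ` is the extension to `K_ℝ`
of the nontrivial `F`-automorphism of `K`. -/
def TKF (σ : RS K →+* RS K) : Set (RS K) := {u | IsUnit u ∧ u * σ u = 1}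

/-- The `O_K`-lattice `u𝔄 ⊆ K_ℝ` for `u ∈ K_ℝ` and a fractional ideal `𝔄` of `K`. -/
def latIdeal (A : FractionalIdeal (𝓞 K)⁰ K) (u : RS K) : AddSubgroup (RS K) where
  carrier := {w | ∃ α ∈ A, w = u * NumberField.mixedEmbedding K α}
  zero_mem' := ⟨0, Submodule.zero_mem _, by simp⟩
  add_mem' := by
    rintro w₁ w₂ ⟨α₁, hα₁, rfl⟩ ⟨α₂, hα₂, rfl⟩
    exact ⟨α₁ + α₂, Submodule.add_mem _ hα₁ hα₂, by rw [map_add, mul_add]⟩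
  neg_mem' := by
    rintro w ⟨α, hα, rfl⟩
    exact ⟨-α, Submodule.neg_mem _ hα, by rw [map_neg, mul_neg]⟩

/-- The lattice `ρ(u𝔄) ⊆ D_F`. -/
def rhoLat (ρ : RS K ≃+ DS F) (A : FractionalIdeal (𝓞 K)⁰ K) (u : RS K) :
    AddSubgroup (DS F) :=
  (latIdeal K A u).map ρ.toAddMonoidHom


/-- The canonical map `ι : F_ℝ → K_ℝ`: the continuous ring homomorphism compatible with the
embeddings of `F` and `K`. -/
def IsIota (ι : RS F →+* RS K) : Prop :=
  Continuous ι ∧ ∀ x : F,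
    ι (NumberField.mixedEmbedding F x) = NumberField.mixedEmbedding K (algebraMap F K x)

/-- `σ : K_ℝ → K_ℝ` is the continuous extension of the nontrivial `F`-automorphism `τ` of `K`. -/
def IsSigma (τ : K ≃ₐ[F] K) (σ : RS K →+* RS K) : Prop :=
  Continuous σ ∧ ∀ x : K,
    σ (NumberField.mixedEmbedding K x) = NumberField.mixedEmbedding K (τ x)

/-- `ρ : K_ℝ → D_F` is an isomorphism of `F_ℝ`-modules preserving the Haar measures and
satisfying `g = f ∘ ρ`. -/
def IsRho (ι : RS F →+* RS K) (ρ : RS K ≃+ DS F) : Prop :=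
  (∀ (x : RS F) (w : RS K), ρ (ι x * w) = structureMap F x * ρ w) ∧
    MeasureTheory.MeasurePreserving ρ (measR K) (measD F) ∧
    ∀ w : RS K, fR K w = fD F (ρ w)

/-- `S` is a set of norm-one representatives for `T_K/T_F` and `ν` is (supported on `S`)
the quotient Haar measure, characterized by the Fubini-type property
`∫_{T_K} φ = ∫_{T_K/T_F} ∫_{T_F} φ(t·ũ) dt du`. -/
def IsQuotMeasureK (ι : RS F →+* RS K) (ν : Measure (RS K)) (S : Set (RS K)) : Prop :=
  (∀ u ∈ S, u ∈ TF K ∧ normR K u = 1) ∧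
    ∀ φ : RS K → ENNReal, Measurable φ →
      ∫⁻ t in TF K, φ t ∂(measT K) =
        ∫⁻ u in S, ∫⁻ t in TF F, φ (ι t * u) ∂(measT F) ∂ν

/-- `S₀ ⊆ S` is a fundamental domain for the action of (the image of) `U_K` on `T_K/T_F`,
the latter quotient being represented by the set `S`. -/
def IsFundDomK (ι : RS F →+* RS K) (S S₀ : Set (RS K)) : Prop :=
  S₀ ⊆ S ∧ ∀ u ∈ S, ∃! u₀, u₀ ∈ S₀ ∧ ∃ (ε : (𝓞 K)ˣ) (t : RS F), IsUnit t ∧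
    u = ι t * NumberField.mixedEmbedding K ((ε : 𝓞 K) : K) * u₀

/-- `L` is a section `T_{K/F} → T_K`, `u ↦ ũ`, with `ũ/ũ' = u` and `|N_{K/ℚ}(ũ)| = 1`,
and `ν` is the Haar measure `d^×u` on `T_{K/F}`, characterized by the Fubini-type property
`∫_{T_K} φ(t) d^×t = ∫_{T_{K/F}} ∫_{T_F} φ(t·ũ) d^×t d^×u`. -/
def IsQuotMeasureKF (σ : RS K →+* RS K) (ι : RS F →+* RS K) (L : RS K → RS K)
    (ν : Measure (RS K)) : Prop :=
  (∀ u ∈ TKF K σ, L u ∈ TF K ∧ normR K (L u) = 1 ∧ L u = u * σ (L u)) ∧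
    ∀ φ : RS K → ENNReal, Measurable φ →
      ∫⁻ t in TF K, φ t ∂(measT K) =
        ∫⁻ u in TKF K σ, ∫⁻ t in TF F, φ (ι t * L u) ∂(measT F) ∂ν

/-- `S₀` is a fundamental domain for the multiplicative action of `U_{K/F}²` on `T_{K/F}`. -/
def IsFundDomKF (τ : K ≃ₐ[F] K) (σ : RS K →+* RS K) (S₀ : Set (RS K)) : Prop :=
  S₀ ⊆ TKF K σ ∧ ∀ u ∈ TKF K σ, ∃! u₀, u₀ ∈ S₀ ∧ ∃ δ : (𝓞 K)ˣ, δ ∈ UKF F K τ ∧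
    u = NumberField.mixedEmbedding K ((((δ ^ 2 : (𝓞 K)ˣ) : 𝓞 K)) : K) * u₀

end Quadratic


/-! ### Poisson summation for the standard lattice -/

section Poisson

variable {ι : Type*} [Fintype ι]

/-- The inclusion `ℤ^ι ⊆ ℝ^ι`. -/
def intVec (n : ι → ℤ) : ι → ℝ := fun i => (n i : ℝ)

lemma norm_intVec (n : ι → ℤ) : ‖intVec n‖ = ‖n‖ := by
  simp [intVec, Pi.norm_def]
  rfl

/-- The ℤ-span of the standard basis is all of `ℤ^ι`. -/
lemma mem_span_basisFun {x : ι → ℝ} :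
    x ∈ Submodule.span ℤ (Set.range (Pi.basisFun ℝ ι)) ↔ ∃ n : ι → ℤ, intVec n = x := by
  rw [Module.Basis.mem_span_iff_repr_mem]
  constructor
  · intro h
    choose n hn using h
    exact ⟨n, funext fun i => by simpa [intVec] using hn i⟩
  · rintro ⟨n, rfl⟩ i
    exact ⟨n i, by simp [intVec]⟩

/-- `ℤ^ι` as the standard lattice in `ℝ^ι`. -/
def intVecEquiv : (ι → ℤ) ≃ (Submodule.span ℤ (Set.range (Pi.basisFun ℝ ι))).toAddSubgroup :=
  Equiv.ofBijective (fun n => ⟨intVec n, mem_span_basisFun.2 ⟨n, rfl⟩⟩) <| by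
    constructor
    · intro m n h
      have h := congrArg Subtype.val h
      funext i
      have := congrFun h i
      simpa [intVec] using this
    · rintro ⟨x, hx⟩
      obtain ⟨n, rfl⟩ := mem_span_basisFun.1 hx
      exact ⟨n, rfl⟩

/-- Gaussians are summable over `ℤ^ι`, being dominated by a summable power of the norm. -/
lemma summable_gauss {c : ℝ} (hc : 0 < c) :
    Summable fun n : ι → ℤ => Real.exp (-c * ‖intVec n‖ ^ 2) := by
  set L := Submodule.span ℤ (Set.range (Pi.basisFun ℝ ι)) with hL
  obtain ⟨r, hr⟩ := exists_lt (-(Module.finrank ℤ L : ℝ))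
  have h1 := (ZLattice.summable_norm_rpow L r hr).comp_injective (intVecEquiv (ι := ι)).injective
  refine summable_of_isBigO h1 ?_
  have h2 := (rexp_neg_quadratic_isLittleO_rpow_atTop (neg_lt_zero.2 hc) 0 r).isBigO
  have h3 : Filter.Tendsto (fun n : ι → ℤ => ‖intVec n‖) Filter.cofinite Filter.atTop := by
    simp_rw [norm_intVec]
    rw [← Filter.cocompact_eq_cofinite]
    exact tendsto_norm_cocompact_atTop
  have h4 := h2.comp_tendsto h3
  simpa [Function.comp_def] using! h4

/-- Translates of a function with Gaussian decay are uniformly summable over `ℤ^ι` on bounded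
sets. -/
lemma gauss_translate {f : (ι → ℝ) → ℂ} {c : ℝ} (hc : 0 < c)
    (hf : ∀ x, ‖f x‖ ≤ Real.exp (-c * ‖x‖ ^ 2)) {R : ℝ} {x : ι → ℝ} (hx : ‖x‖ ≤ R) (n : ι → ℤ) :
    ‖f (x + intVec n)‖ ≤ Real.exp (c * R ^ 2) * Real.exp (-(c / 2) * ‖intVec n‖ ^ 2) := by
  refine (hf _).trans ?_
  rw [← Real.exp_add, Real.exp_le_exp]
  have h1 : ‖intVec n‖ ≤ ‖x + intVec n‖ + ‖x‖ := by
    simpa using norm_sub_le (x + intVec n) x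
  have h2 : ‖intVec n‖ ^ 2 ≤ 2 * ‖x + intVec n‖ ^ 2 + 2 * R ^ 2 := by
    have h3 : ‖intVec n‖ ^ 2 ≤ (‖x + intVec n‖ + ‖x‖) ^ 2 := by gcongr
    have h4 : ‖x‖ ^ 2 ≤ R ^ 2 := by gcongr
    nlinarith [sq_nonneg (‖x + intVec n‖ - ‖x‖)]
  nlinarith

/-- The projection `ℝ^ι → (ℝ/ℤ)^ι`. -/
def torusMk (x : ι → ℝ) : UnitAddTorus ι := fun i => (x i : UnitAddCircle)

lemma isOpenQuotientMap_torusMk : IsOpenQuotientMap (torusMk (ι := ι)) :=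
  IsOpenQuotientMap.piMap (fun _ => QuotientAddGroup.isOpenQuotientMap_mk)

lemma torusMk_eq {x y : ι → ℝ} (h : torusMk x = torusMk y) : ∃ n : ι → ℤ, y = x + intVec n := by
  have h' : ∀ i, ∃ n : ℤ, y i = x i + n := by
    intro i
    have h1 : (x i : UnitAddCircle) = (y i : UnitAddCircle) := congrFun h i
    rw [QuotientAddGroup.eq, AddSubgroup.mem_zmultiples_iff] at h1
    obtain ⟨n, hn⟩ := h1
    refine ⟨n, ?_⟩
    simp at hn
    linarith
  choose n hn using h'
  exact ⟨n, funext hn⟩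

lemma torusMk_add (x : ι → ℝ) (n : ι → ℤ) : torusMk (x + intVec n) = torusMk x := by
  funext i
  simp [torusMk, intVec]

lemma mFourier_torusMk (m : ι → ℤ) (x : ι → ℝ) :
    UnitAddTorus.mFourier m (torusMk x) =
      Complex.exp (2 * Real.pi * Complex.I * ((∑ i, (m i : ℝ) * x i : ℝ) : ℂ)) := by
  simp only [UnitAddTorus.mFourier, ContinuousMap.coe_mk, torusMk, fourier_coe_apply]
  rw [← Complex.exp_sum]
  congr 1
  push_cast
  rw [Finset.mul_sum]
  refine Finset.sum_congr rfl fun i _ => ?_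
  ring

/-- The unit cube, in the half-open form used for integrals over the torus, is a.e. equal to the
standard fundamental domain of `ℤ^ι`. -/
lemma cube_ae_eq :
    ({x : ι → ℝ | ∀ i, x i ∈ Set.Ioc ((0 : ι → ℝ) i) ((0 : ι → ℝ) i + 1)} : Set (ι → ℝ)) =ᵐ[volume]
      ZSpan.fundamentalDomain (Pi.basisFun ℝ ι) := by
  rw [ZSpan.fundamentalDomain_pi_basisFun]
  have h1 := Measure.univ_pi_Ioc_ae_eq_Icc (μ := fun _ : ι => (volume : Measure ℝ))
    (f := fun _ => 0) (g := fun _ => 1)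
  have h2 := Measure.univ_pi_Ico_ae_eq_Icc (μ := fun _ : ι => (volume : Measure ℝ))
    (f := fun _ => 0) (g := fun _ => 1)
  have h3 := h1.trans h2.symm
  have h4 : {x : ι → ℝ | ∀ i, x i ∈ Set.Ioc ((0 : ι → ℝ) i) ((0 : ι → ℝ) i + 1)} =
      Set.univ.pi fun _ => Set.Ioc (0 : ℝ) 1 := by
    ext x
    simp
  rw [h4]
  exact h3

/-- **Poisson summation** on `ℝ^ι` for a continuous function with Gaussian decay. -/
theorem poisson (f : C(ι → ℝ, ℂ)) {c : ℝ} (hc : 0 < c)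
    (hf : ∀ x, ‖f x‖ ≤ Real.exp (-c * ‖x‖ ^ 2)) (hfint : Integrable f)
    (hsum : Summable fun m : ι → ℤ => ∫ x : ι → ℝ, f x *
      Complex.exp (-(2 * Real.pi * Complex.I * ((∑ i, (m i : ℝ) * x i : ℝ) : ℂ)))) :
    ∑' n : ι → ℤ, f (intVec n) = ∑' m : ι → ℤ, ∫ x : ι → ℝ, f x *
      Complex.exp (-(2 * Real.pi * Complex.I * ((∑ i, (m i : ℝ) * x i : ℝ) : ℂ))) := by
  let T : (ι → ℤ) → C(ι → ℝ, ℂ) := fun n => f.comp (ContinuousMap.addRight (intVec n))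
  have hT : Summable T := by
    refine ContinuousMap.summable_of_locally_summable_norm fun K => ?_
    obtain ⟨R, hR⟩ := K.isCompact.isBounded.exists_norm_le
    refine Summable.of_nonneg_of_le (fun _ => norm_nonneg _) (fun n => ?_)
      ((summable_gauss (ι := ι) (half_pos hc)).mul_left (Real.exp (c * R ^ 2)))
    refine (ContinuousMap.norm_le _ (by positivity)).2 fun x => ?_
    exact gauss_translate hc hf (hR x x.2) n
  let P : C(ι → ℝ, ℂ) := ∑' n, T n
  have hP : ∀ x, P x = ∑' n : ι → ℤ, f (x + intVec n) := fun x =>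
    (ContinuousMap.tsum_apply hT x).symm
  have hPper : ∀ x (n : ι → ℤ), P (x + intVec n) = P x := by
    intro x n
    rw [hP, hP, ← (Equiv.addLeft n).tsum_eq (fun k : ι → ℤ => f (x + intVec k))]
    refine tsum_congr fun k => ?_
    congr 1
    funext i
    simp [intVec, add_assoc]
  have hlift : ∀ x y : ι → ℝ, torusMk x = torusMk y → P x = P y := by
    intro x y h
    obtain ⟨n, rfl⟩ := torusMk_eq h
    exact (hPper x n).symm
  -- the periodization `P` descends to a continuous function on the torus
  let G : C(UnitAddTorus ι, ℂ) :=
    isOpenQuotientMap_torusMk.isQuotientMap.lift (f := ⟨torusMk, isOpenQuotientMap_torusMk.continuous⟩)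
      P (fun x y h => hlift x y h)
  have hG : ∀ x, G (torusMk x) = P x := fun x =>
    congrFun (congrArg DFunLike.coe (Topology.IsQuotientMap.lift_comp
      (f := ⟨torusMk, isOpenQuotientMap_torusMk.continuous⟩)
      isOpenQuotientMap_torusMk.isQuotientMap P (fun x y h => hlift x y h))) x
  -- unfolding: an integral over `ℝ^ι` is the sum of the integrals over the translates of the cube
  have hcoef : ∀ m : ι → ℤ, UnitAddTorus.mFourierCoeff G m = ∫ x : ι → ℝ, f x *
      Complex.exp (-(2 * Real.pi * Complex.I * ((∑ i, (m i : ℝ) * x i : ℝ) : ℂ))) := by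
    intro m
    set e : (ι → ℝ) → ℂ := fun x =>
      Complex.exp (-(2 * Real.pi * Complex.I * ((∑ i, (m i : ℝ) * x i : ℝ) : ℂ))) with he
    have hem : ∀ x, UnitAddTorus.mFourier (-m) (torusMk x) = e x := by
      intro x
      rw [mFourier_torusMk, he]
      simp
    have henorm : ∀ x, ‖e x‖ = 1 := by
      intro x
      rw [he]
      simp [Complex.norm_exp]
    have hec : Continuous e := by
      rw [he]
      fun_prop
    have heper : ∀ x n, e (x + intVec n) = e x := by
      intro x n
      rw [← hem, ← hem, torusMk_add]
    have hInt : Integrable (fun x => f x * e x) := by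
      refine hfint.mul_bdd (c := 1) hec.aestronglyMeasurable (Filter.Eventually.of_forall fun x => ?_)
      rw [henorm]
    set S : Set (ι → ℝ) := ZSpan.fundamentalDomain (Pi.basisFun ℝ ι) with hS
    have hSb : Bornology.IsBounded S := ZSpan.fundamentalDomain_isBounded _
    have hSm : MeasurableSet S := ZSpan.fundamentalDomain_measurableSet _
    have hSfin : volume S < ⊤ := hSb.measure_lt_top
    obtain ⟨R, hR⟩ := hSb.exists_norm_le
    have := (intVecEquiv (ι := ι)).surjective.countable
    rw [UnitAddTorus.mFourierCoeff_eq_integral G m 0, setIntegral_congr_set cube_ae_eq,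
      (ZSpan.isAddFundamentalDomain' (Pi.basisFun ℝ ι) volume).integral_eq_tsum'' _ hInt,
      ← intVecEquiv.tsum_eq]
    have hterm : ∀ n : ι → ℤ, ∀ x, f (((intVecEquiv n :
        (Submodule.span ℤ (Set.range (Pi.basisFun ℝ ι))).toAddSubgroup)) +ᵥ x) *
        e ((intVecEquiv n : (Submodule.span ℤ (Set.range (Pi.basisFun ℝ ι))).toAddSubgroup) +ᵥ x) =
        e x * f (x + intVec n) := by
      intro n x
      have : ((intVecEquiv n : (Submodule.span ℤ (Set.range (Pi.basisFun ℝ ι))).toAddSubgroup) +ᵥ x)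
          = x + intVec n := add_comm _ _
      rw [this, heper, mul_comm]
    simp_rw [hterm]
    have hb : ∀ n : ι → ℤ, ∀ x ∈ S, ‖e x * f (x + intVec n)‖ ≤
        Real.exp (c * R ^ 2) * Real.exp (-(c / 2) * ‖intVec n‖ ^ 2) := by
      intro n x hx
      rw [norm_mul, henorm, one_mul]
      exact gauss_translate hc hf (hR x hx) n
    have hcont : ∀ n : ι → ℤ, Continuous fun x => e x * f (x + intVec n) := by
      intro n
      fun_prop
    rw [integral_tsum_of_summable_integral_norm]
    · refine setIntegral_congr_fun hSm fun x _ => ?_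
      change UnitAddTorus.mFourier (-m) (torusMk x) • G (torusMk x) = _
      rw [hem, hG, hP, smul_eq_mul, tsum_mul_left]
    · intro n
      refine Integrable.mono' (integrableOn_const hSfin.ne)
        (hcont n).aestronglyMeasurable.restrict ((ae_restrict_iff' hSm).2
          (Filter.Eventually.of_forall (hb n)))
    · refine Summable.of_nonneg_of_le (fun n => integral_nonneg fun _ => norm_nonneg _) (fun n => ?_)
        (((summable_gauss (ι := ι) (half_pos hc)).mul_left
          (Real.exp (c * R ^ 2))).mul_right (volume.real S))
      have := norm_setIntegral_le_of_norm_le_const (f := fun x => ‖e x * f (x + intVec n)‖)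
        hSfin (fun x hx => by rw [norm_norm]; exact hb n x hx)
      exact (le_abs_self _).trans this
  -- a summable Fourier series converges pointwise; evaluate at `0`
  have hmain := (UnitAddTorus.hasSum_mFourier_series_apply_of_summable (f := G)
    (by rwa [funext hcoef]) (torusMk 0)).tsum_eq
  rw [hG, hP] at hmain
  simp only [zero_add] at hmain
  rw [← hmain]
  refine tsum_congr fun m => ?_
  rw [hcoef, mFourier_torusMk]
  simp

end Poisson

/-! ### The Fourier transform of the Gaussian on `D_F` -/

section Gaussian

lemma volH_eq_volume : volH = volume :=
  (Quaternion.linearIsometryEquivTuple.symm.measurePreserving).map_eq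

instance : (volH).IsAddHaarMeasure := by
  rw [volH_eq_volume]
  infer_instance

instance : ((4 : ENNReal) • volH).IsAddHaarMeasure :=
  Measure.IsAddHaarMeasure.smul _ (by norm_num) (by norm_num)

instance : (measD F).IsAddHaarMeasure := by
  unfold measD
  exact Measure.prod.instIsAddHaarMeasure _ _

/-- Fourier transform of the Gaussian on `D_v = ℂ` for `v` real. -/
lemma gaussC {t : ℝ} (ht : t ≠ 0) (w : ℂ) :
    ∫ z : ℂ, ((Real.exp (-Real.pi * (|t| * ‖z‖) ^ 2) : ℝ) : ℂ) *
        Complex.exp (-(2 * Real.pi * Complex.I * (((z * w).re : ℝ) : ℂ))) =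
      (((|t| ^ 2)⁻¹ * Real.exp (-Real.pi * (|t|⁻¹ * ‖w‖) ^ 2) : ℝ) : ℂ) := by
  have ht' : 0 < |t| := abs_pos.2 ht
  have hpi := Real.pi_pos
  set b : ℝ := Real.pi * |t| ^ 2 with hb
  have hb0 : 0 < b := by positivity
  have h := GaussianFourier.integral_cexp_neg_mul_sq_norm_add (V := ℂ) (b := (b : ℂ))
    (by simpa using hb0) (-(2 * Real.pi * Complex.I)) ((starRingEnd ℂ) w)
  have hl : ∀ z : ℂ, ((Real.exp (-Real.pi * (|t| * ‖z‖) ^ 2) : ℝ) : ℂ) *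
      Complex.exp (-(2 * Real.pi * Complex.I * (((z * w).re : ℝ) : ℂ))) =
      Complex.exp (-(b : ℂ) * ‖z‖ ^ 2 + -(2 * Real.pi * Complex.I) *
        ((inner ℝ ((starRingEnd ℂ) w) z : ℝ) : ℂ)) := by
    intro z
    rw [Complex.ofReal_exp, ← Complex.exp_add]
    have : inner ℝ ((starRingEnd ℂ) w) z = (z * w).re := by
      rw [Complex.inner]; simp
    rw [this, hb]
    push_cast
    ring_nf
  simp_rw [hl]
  rw [h]
  have e1 : ((Real.pi : ℂ) / (b : ℂ)) ^ ((Module.finrank ℝ ℂ : ℂ) / 2) = (((|t| ^ 2)⁻¹ : ℝ) : ℂ) := by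
    rw [Complex.finrank_real_complex]
    have : (Real.pi : ℂ) / (b : ℂ) = (((|t| ^ 2)⁻¹ : ℝ) : ℂ) := by
      rw [← Complex.ofReal_div, hb]
      congr 1
      field_simp
    rw [this]
    norm_num
  rw [e1, Complex.ofReal_mul (|t| ^ 2)⁻¹, Complex.ofReal_exp]
  congr 2
  have hI : (-(2 * (Real.pi : ℂ) * Complex.I)) ^ 2 = ((-(4 * Real.pi ^ 2) : ℝ) : ℂ) := by
    push_cast
    linear_combination 4 * (Real.pi : ℂ) ^ 2 * Complex.I_sq
  rw [hI, RCLike.norm_conj]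
  norm_cast
  rw [hb]
  field_simp

/-- Fourier transform of the Gaussian on `D_v = ℍ` for `v` complex. -/
lemma gaussH {t : ℂ} (ht : t ≠ 0) (w : Quaternion ℝ) :
    ∫ z : Quaternion ℝ, ((Real.exp (-(2 * Real.pi) * (‖t‖ * ‖z‖) ^ 2) : ℝ) : ℂ) *
        Complex.exp (-(2 * Real.pi * Complex.I * ((2 * (z * w).re : ℝ) : ℂ)))
          ∂((4 : ENNReal) • volH) =
      (((‖t‖ ^ 4)⁻¹ * Real.exp (-(2 * Real.pi) * (‖t‖⁻¹ * ‖w‖) ^ 2) : ℝ) : ℂ) := by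
  have ht' : 0 < ‖t‖ := norm_pos_iff.2 ht
  have hpi := Real.pi_pos
  set b : ℝ := 2 * Real.pi * ‖t‖ ^ 2 with hb
  have hb0 : 0 < b := by positivity
  have h := GaussianFourier.integral_cexp_neg_mul_sq_norm_add (V := Quaternion ℝ) (b := (b : ℂ))
    (by simpa using hb0) (-(4 * Real.pi * Complex.I)) (star w)
  have hl : ∀ z : Quaternion ℝ, ((Real.exp (-(2 * Real.pi) * (‖t‖ * ‖z‖) ^ 2) : ℝ) : ℂ) *
      Complex.exp (-(2 * Real.pi * Complex.I * ((2 * (z * w).re : ℝ) : ℂ))) =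
      Complex.exp (-(b : ℂ) * ‖z‖ ^ 2 + -(4 * Real.pi * Complex.I) *
        ((inner ℝ (star w) z : ℝ) : ℂ)) := by
    intro z
    rw [Complex.ofReal_exp, ← Complex.exp_add]
    have : inner ℝ (star w) z = (z * w).re := by
      rw [real_inner_comm, Quaternion.inner_def, star_star]
    rw [this, hb]
    push_cast
    ring_nf
  simp_rw [hl]
  rw [integral_smul_measure, volH_eq_volume, h]
  have e1 : ((Real.pi : ℂ) / (b : ℂ)) ^ ((Module.finrank ℝ (Quaternion ℝ) : ℂ) / 2) =
      (((4 * ‖t‖ ^ 4)⁻¹ : ℝ) : ℂ) := by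
    rw [Quaternion.finrank_eq_four]
    have : (Real.pi : ℂ) / (b : ℂ) = (((2 * ‖t‖ ^ 2)⁻¹ : ℝ) : ℂ) := by
      rw [← Complex.ofReal_div, hb]
      congr 1
      field_simp
    rw [this]
    have h2 : ((4 : ℕ) : ℂ) / 2 = ((2 : ℕ) : ℂ) := by norm_num
    rw [h2, Complex.cpow_natCast, ← Complex.ofReal_pow]
    congr 1
    field_simp
    norm_num
  have hI : (-(4 * (Real.pi : ℂ) * Complex.I)) ^ 2 = ((-(16 * Real.pi ^ 2) : ℝ) : ℂ) := by
    push_cast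
    linear_combination 16 * (Real.pi : ℂ) ^ 2 * Complex.I_sq
  have e2 : Complex.exp ((-(4 * (Real.pi : ℂ) * Complex.I)) ^ 2 * (‖star w‖ : ℂ) ^ 2 / (4 * (b : ℂ))) =
      ((Real.exp (-(2 * Real.pi) * (‖t‖⁻¹ * ‖w‖) ^ 2) : ℝ) : ℂ) := by
    rw [hI, norm_star, Complex.ofReal_exp]
    congr 1
    norm_cast
    rw [hb]
    field_simp
    ring
  rw [e1, e2]
  have h4 : (4 : ENNReal).toReal = 4 := by norm_num
  rw [h4, ← Complex.ofReal_mul, Complex.real_smul, ← Complex.ofReal_mul]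
  congr 1
  field_simp

/-- The pairing `⟨z, w⟩ = Tr(x-coordinate of z w)` on `D_F`, so that `ψ(z w) = exp(2πi ⟨z, w⟩)`. -/
def pair (z w : DS F) : ℝ := TrR F (projX F (z * w))

lemma pair_eq (z w : DS F) :
    pair F z w = (∑ v, (z.1 v * w.1 v).re) + ∑ v, 2 * (z.2 v * w.2 v).re := rfl

lemma norm_coeComplex (z : ℂ) : ‖(z : Quaternion ℝ)‖ = ‖z‖ := by
  rw [← sq_eq_sq₀ (norm_nonneg _) (norm_nonneg _), sq, ← Quaternion.normSq_eq_norm_mul_self,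
    ← Complex.normSq_eq_norm_sq, Quaternion.normSq_def', Complex.normSq_apply]
  simp
  ring

lemma fD_mul (t : RS F) (z : DS F) :
    fD F (structureMap F t * z) = (∏ v, Real.exp (-Real.pi * (|t.1 v| * ‖z.1 v‖) ^ 2)) *
      ∏ v, Real.exp (-(2 * Real.pi) * (‖t.2 v‖ * ‖z.2 v‖) ^ 2) := by
  unfold fD
  congr 1
  · refine Finset.prod_congr rfl fun v _ => ?_
    have : (structureMap F t * z).1 v = (t.1 v : ℂ) * z.1 v := rfl
    rw [this, norm_mul, Complex.norm_real, Real.norm_eq_abs]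
  · refine Finset.prod_congr rfl fun v _ => ?_
    have : (structureMap F t * z).2 v = ((t.2 v : ℂ) : Quaternion ℝ) * z.2 v := rfl
    rw [this, norm_mul, norm_coeComplex]

lemma isUnit_RS {t : RS F} (ht : t ∈ TF F) : (∀ v, t.1 v ≠ 0) ∧ ∀ v, t.2 v ≠ 0 := by
  have h := Prod.isUnit_iff.1 (show IsUnit t from ht)
  exact ⟨fun v => (Pi.isUnit_iff.1 h.1 v).ne_zero, fun v => (Pi.isUnit_iff.1 h.2 v).ne_zero⟩

lemma inverse_RS {t : RS F} (ht : t ∈ TF F) :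
    (∀ v, (Ring.inverse t).1 v = (t.1 v)⁻¹) ∧ ∀ v, (Ring.inverse t).2 v = (t.2 v)⁻¹ := by
  have h := Ring.mul_inverse_cancel t ht
  constructor
  · intro v
    exact eq_inv_of_mul_eq_one_right (congrFun (congrArg Prod.fst h) v)
  · intro v
    exact eq_inv_of_mul_eq_one_right (congrFun (congrArg Prod.snd h) v)

/-- The integrand of the Fourier transform of `z ↦ f(t z)` splits as a product over places. -/
lemma integrand_eq (t : RS F) (z w : DS F) :
    (fD F (structureMap F t * z) : ℂ) *
      Complex.exp (-(2 * Real.pi * Complex.I * (pair F z w : ℂ))) =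
    (∏ v, ((Real.exp (-Real.pi * (|t.1 v| * ‖z.1 v‖) ^ 2) : ℝ) : ℂ) *
        Complex.exp (-(2 * Real.pi * Complex.I * (((z.1 v * w.1 v).re : ℝ) : ℂ)))) *
    ∏ v, ((Real.exp (-(2 * Real.pi) * (‖t.2 v‖ * ‖z.2 v‖) ^ 2) : ℝ) : ℂ) *
        Complex.exp (-(2 * Real.pi * Complex.I * ((2 * (z.2 v * w.2 v).re : ℝ) : ℂ))) := by
  have h : Complex.exp (-(2 * Real.pi * Complex.I * (pair F z w : ℂ))) =
      (∏ v, Complex.exp (-(2 * Real.pi * Complex.I * (((z.1 v * w.1 v).re : ℝ) : ℂ)))) *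
      ∏ v, Complex.exp (-(2 * Real.pi * Complex.I * ((2 * (z.2 v * w.2 v).re : ℝ) : ℂ))) := by
    rw [← Complex.exp_sum, ← Complex.exp_sum, ← Complex.exp_add, pair_eq]
    congr 1
    rw [Complex.ofReal_add, Complex.ofReal_sum, Complex.ofReal_sum, mul_add, Finset.mul_sum,
      Finset.mul_sum, neg_add, ← Finset.sum_neg_distrib, ← Finset.sum_neg_distrib]
  rw [h, fD_mul, Finset.prod_mul_distrib, Finset.prod_mul_distrib]
  push_cast
  ring

/-- The Fourier transform of `z ↦ f(t z)` with respect to the pairing and the measure of `D_F`. -/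
lemma fourier_fD {t : RS F} (ht : t ∈ TF F) (w : DS F) :
    ∫ z, (fD F (structureMap F t * z) : ℂ) *
        Complex.exp (-(2 * Real.pi * Complex.I * (pair F z w : ℂ))) ∂(measD F) =
      ((((normR F t) ^ 2)⁻¹ * fD F (structureMap F (Ring.inverse t) * w) : ℝ) : ℂ) := by
  obtain ⟨h1, h2⟩ := isUnit_RS F ht
  obtain ⟨i1, i2⟩ := inverse_RS F ht
  simp_rw [integrand_eq]
  unfold measD
  rw [integral_prod_mul
    (fun z : {v : InfinitePlace F // v.IsReal} → ℂ =>
      ∏ v, ((Real.exp (-Real.pi * (|t.1 v| * ‖z v‖) ^ 2) : ℝ) : ℂ) *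
        Complex.exp (-(2 * Real.pi * Complex.I * (((z v * w.1 v).re : ℝ) : ℂ))))
    (fun z : {v : InfinitePlace F // v.IsComplex} → Quaternion ℝ =>
      ∏ v, ((Real.exp (-(2 * Real.pi) * (‖t.2 v‖ * ‖z v‖) ^ 2) : ℝ) : ℂ) *
        Complex.exp (-(2 * Real.pi * Complex.I * ((2 * (z v * w.2 v).re : ℝ) : ℂ)))),
    integral_fintype_prod_eq_prod (fun (v : {v : InfinitePlace F // v.IsReal}) (z : ℂ) =>
      ((Real.exp (-Real.pi * (|t.1 v| * ‖z‖) ^ 2) : ℝ) : ℂ) *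
        Complex.exp (-(2 * Real.pi * Complex.I * (((z * w.1 v).re : ℝ) : ℂ)))),
    integral_fintype_prod_eq_prod (fun (v : {v : InfinitePlace F // v.IsComplex})
      (z : Quaternion ℝ) =>
      ((Real.exp (-(2 * Real.pi) * (‖t.2 v‖ * ‖z‖) ^ 2) : ℝ) : ℂ) *
        Complex.exp (-(2 * Real.pi * Complex.I * ((2 * (z * w.2 v).re : ℝ) : ℂ))))]
  rw [Finset.prod_congr rfl fun v _ => gaussC (h1 v) (w.1 v),
    Finset.prod_congr rfl fun v _ => gaussH (h2 v) (w.2 v), fD_mul]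
  simp only [i1, i2, abs_inv, norm_inv, normR]
  rw [← Complex.ofReal_prod, ← Complex.ofReal_prod, ← Complex.ofReal_mul]
  congr 1
  simp only [Finset.prod_mul_distrib, mul_pow, Finset.prod_inv_distrib, ← Finset.prod_pow, ← pow_mul,
    mul_inv]
  ring

lemma integrable_fD {t : RS F} (ht : t ∈ TF F) :
    Integrable (fun z => (fD F (structureMap F t * z) : ℂ)) (measD F) := by
  obtain ⟨h1, h2⟩ := isUnit_RS F ht
  simp_rw [fD_mul]
  push_cast
  unfold measD
  refine Integrable.mul_prod
    (f := fun z : {v : InfinitePlace F // v.IsReal} → ℂ =>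
      ∏ v, Complex.exp (-(Real.pi : ℂ) * (|t.1 v| * ‖z v‖) ^ 2))
    (g := fun z : {v : InfinitePlace F // v.IsComplex} → Quaternion ℝ =>
      ∏ v, Complex.exp (-(2 * (Real.pi : ℂ)) * (‖t.2 v‖ * ‖z v‖) ^ 2)) ?_ ?_
  · refine Integrable.fintype_prod (f := fun (v : {v : InfinitePlace F // v.IsReal}) (z : ℂ) =>
      Complex.exp (-(Real.pi : ℂ) * (|t.1 v| * ‖z‖) ^ 2)) fun v => ?_
    have h0 : 0 < Real.pi * |t.1 v| ^ 2 :=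
      mul_pos Real.pi_pos (pow_pos (abs_pos.2 (h1 v)) 2)
    refine (GaussianFourier.integrable_cexp_neg_mul_sq_norm_add (V := ℂ)
      (b := ((Real.pi * |t.1 v| ^ 2 : ℝ) : ℂ)) (by rwa [Complex.ofReal_re]) 0 0).congr
      (Filter.Eventually.of_forall fun z => ?_)
    simp only [Complex.ofReal_mul, Complex.ofReal_pow, zero_mul, add_zero]
    ring_nf
  · refine Integrable.fintype_prod (f := fun (v : {v : InfinitePlace F // v.IsComplex})
      (z : Quaternion ℝ) => Complex.exp (-(2 * (Real.pi : ℂ)) * (‖t.2 v‖ * ‖z‖) ^ 2)) fun v => ?_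
    have h0 : 0 < 2 * Real.pi * ‖t.2 v‖ ^ 2 :=
      mul_pos Real.two_pi_pos (pow_pos (norm_pos_iff.2 (h2 v)) 2)
    rw [volH_eq_volume]
    refine Integrable.smul_measure ?_ (by norm_num)
    refine (GaussianFourier.integrable_cexp_neg_mul_sq_norm_add (V := Quaternion ℝ)
      (b := ((2 * Real.pi * ‖t.2 v‖ ^ 2 : ℝ) : ℂ)) (by rwa [Complex.ofReal_re]) 0 0).congr
      (Filter.Eventually.of_forall fun z => ?_)
    simp only [Complex.ofReal_mul, Complex.ofReal_pow, zero_mul, add_zero]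
    push_cast
    ring_nf

end Gaussian

/-! ### Lattice coordinates, duality and covolume -/

section Lattice

lemma pair_add_left (x y w : DS F) : pair F (x + y) w = pair F x w + pair F y w := by
  unfold pair
  rw [add_mul, projX_add, TrR_add]

lemma pair_add_right (x y w : DS F) : pair F w (x + y) = pair F w x + pair F w y := by
  unfold pair
  rw [mul_add, projX_add, TrR_add]

lemma TrR_smul (r : ℝ) (z : DS F) : TrR F (projX F (r • z)) = r * TrR F (projX F z) := by
  have h1 : ∀ v, ((r • z).1 v).re = r * (z.1 v).re := fun v => by simp
  have h2 : ∀ v, ((r • z).2 v).re = r * (z.2 v).re := fun v => by simp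
  simp only [TrR, projX, h1, h2, mul_add, Finset.mul_sum]
  congr 1
  refine Finset.sum_congr rfl fun v _ => ?_
  ring

/-- The pairing as an `ℝ`-bilinear form. -/
def pairL : DS F →ₗ[ℝ] DS F →ₗ[ℝ] ℝ :=
  LinearMap.mk₂ ℝ (pair F) (fun x y w => pair_add_left F x y w)
    (fun r x w => by
      unfold pair
      rw [smul_mul_assoc, TrR_smul, smul_eq_mul])
    (fun w x y => pair_add_right F x y w)
    (fun r x w => by
      unfold pair
      rw [mul_smul_comm, TrR_smul, smul_eq_mul])

lemma pairL_apply (z w : DS F) : pairL F z w = pair F z w := rfl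

/-- The pairing is non-degenerate: `⟨w̄, w⟩` is a positive definite quadratic form in `w`. -/
lemma eq_zero_of_pair {w : DS F} (h : ∀ z, pair F z w = 0) : w = 0 := by
  have h0 := h (fun v => (starRingEnd ℂ) (w.1 v), fun v => star (w.2 v))
  rw [pair_eq] at h0
  have e1 : ∀ v, ((starRingEnd ℂ) (w.1 v) * w.1 v).re = ‖w.1 v‖ ^ 2 := by
    intro v
    rw [← Complex.normSq_eq_norm_sq, mul_comm, Complex.mul_conj, Complex.ofReal_re]
  have e2 : ∀ v, (star (w.2 v) * w.2 v).re = ‖w.2 v‖ ^ 2 := by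
    intro v
    rw [Quaternion.star_mul_self, Quaternion.re_coe, Quaternion.normSq_eq_norm_mul_self, sq]
  simp only [e1, e2] at h0
  have p1 : 0 ≤ ∑ v, ‖w.1 v‖ ^ 2 := Finset.sum_nonneg fun v _ => by positivity
  have p2 : 0 ≤ ∑ v, 2 * ‖w.2 v‖ ^ 2 := Finset.sum_nonneg fun v _ => by positivity
  have q1 := (Finset.sum_eq_zero_iff_of_nonneg fun v _ => by positivity).1
    (le_antisymm (by linarith) p1)
  have q2 := (Finset.sum_eq_zero_iff_of_nonneg fun v _ => by positivity).1
    (le_antisymm (by linarith) p2)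
  refine Prod.ext (funext fun v => ?_) (funext fun v => ?_)
  · simpa using q1 v (Finset.mem_univ v)
  · simpa using q2 v (Finset.mem_univ v)

lemma psiD_eq_one_iff (z w : DS F) : psiD F (z * w) = 1 ↔ ∃ n : ℤ, (n : ℝ) = pair F z w := by
  unfold psiD
  rw [Complex.exp_eq_one_iff]
  refine exists_congr fun n => ?_
  have h2 : (2 * (Real.pi : ℂ) * Complex.I) ≠ 0 := Complex.two_pi_I_ne_zero
  constructor
  · intro h
    rw [mul_comm] at h
    have := mul_right_cancel₀ h2 h
    exact_mod_cast this.symm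
  · intro h
    unfold pair at h
    rw [← h, mul_comm]
    push_cast
    ring

/-- `f` decays at least as fast as a Gaussian in the sup norm of `D_F`. -/
lemma fD_le (z : DS F) : fD F z ≤ Real.exp (-Real.pi * ‖z‖ ^ 2) := by
  unfold fD
  rw [← Real.exp_sum, ← Real.exp_sum, ← Real.exp_add, Real.exp_le_exp, ← Finset.mul_sum,
    ← Finset.mul_sum]
  have p1 : 0 ≤ ∑ v, ‖z.1 v‖ ^ 2 := Finset.sum_nonneg fun v _ => by positivity
  have p2 : 0 ≤ ∑ v, ‖z.2 v‖ ^ 2 := Finset.sum_nonneg fun v _ => by positivity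
  have key : ‖z‖ ^ 2 ≤ (∑ v, ‖z.1 v‖ ^ 2) + ∑ v, ‖z.2 v‖ ^ 2 := by
    have hS := add_nonneg p1 p2
    have hz : ‖z‖ ≤ Real.sqrt ((∑ v, ‖z.1 v‖ ^ 2) + ∑ v, ‖z.2 v‖ ^ 2) := by
      rw [Prod.norm_def, max_le_iff, pi_norm_le_iff_of_nonneg (Real.sqrt_nonneg _),
        pi_norm_le_iff_of_nonneg (Real.sqrt_nonneg _)]
      constructor <;> intro v <;> apply Real.le_sqrt_of_sq_le
      · have := Finset.single_le_sum (f := fun v => ‖z.1 v‖ ^ 2) (fun v _ => by positivity)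
          (Finset.mem_univ v)
        linarith
      · have := Finset.single_le_sum (f := fun v => ‖z.2 v‖ ^ 2) (fun v _ => by positivity)
          (Finset.mem_univ v)
        linarith
    calc ‖z‖ ^ 2 ≤ (Real.sqrt ((∑ v, ‖z.1 v‖ ^ 2) + ∑ v, ‖z.2 v‖ ^ 2)) ^ 2 := by gcongr
      _ = _ := Real.sq_sqrt hS
  nlinarith [Real.pi_pos]

lemma fD_nonneg (z : DS F) : 0 ≤ fD F z := by
  unfold fD
  positivity

lemma continuous_fD : Continuous (fD F) := by
  unfold fD
  fun_prop

/-- `f ∘ T` has Gaussian decay for every injective linear map `T`. -/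
lemma fD_decay {ι : Type*} [Fintype ι] (T : (ι → ℝ) →ₗ[ℝ] DS F) (hT : Function.Injective T) :
    ∃ c : ℝ, 0 < c ∧ ∀ x, fD F (T x) ≤ Real.exp (-c * ‖x‖ ^ 2) := by
  obtain ⟨K, hK, hTK⟩ := T.exists_antilipschitzWith (LinearMap.ker_eq_bot.2 hT)
  have hK' : (0 : ℝ) < K := hK
  refine ⟨Real.pi * ((K : ℝ)⁻¹) ^ 2, by positivity, fun x => (fD_le F _).trans ?_⟩
  rw [Real.exp_le_exp]
  have h1 : ‖x‖ ≤ K * ‖T x‖ := by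
    simpa using hTK.le_mul_dist x 0
  have h2 : (K : ℝ)⁻¹ * ‖x‖ ≤ ‖T x‖ := by
    rwa [inv_mul_le_iff₀ hK']
  have h3 : ((K : ℝ)⁻¹ * ‖x‖) ^ 2 ≤ ‖T x‖ ^ 2 := by gcongr
  rw [mul_pow] at h3
  nlinarith [Real.pi_pos]

lemma mul_injective {t : RS F} (ht : IsUnit t) :
    Function.Injective fun z : DS F => structureMap F t * z :=
  (ht.map (structureMap F)).mul_right_injective

/-- A discrete cocompact subgroup spans: a linear functional vanishing on it would factor through
the compact quotient, hence be bounded. -/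
lemma span_eq_top {Λ : AddSubgroup (DS F)} [CompactSpace (DS F ⧸ Λ)] :
    Submodule.span ℝ (Λ : Set (DS F)) = ⊤ := by
  by_contra hne
  obtain ⟨φ, hφ0, hφ⟩ := Submodule.exists_le_ker_of_lt_top _ (lt_top_iff_ne_top.2 hne)
  have hφc : Continuous φ := φ.continuous_of_finiteDimensional
  let g : DS F ⧸ Λ → ℝ := QuotientAddGroup.lift Λ φ.toAddMonoidHom
    (fun x hx => hφ (Submodule.subset_span hx))
  have hg : Continuous g := hφc.quotient_lift _
  have hsurj : Function.Surjective g := by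
    intro y
    obtain ⟨x, hx⟩ := LinearMap.surjective hφ0 y
    exact ⟨(x : DS F ⧸ Λ), hx⟩
  have := isCompact_range hg
  rw [hsurj.range_eq] at this
  exact noncompact_univ ℝ this

/-- An `O_F`-lattice is the ℤ-span of an ℝ-basis of `D_F`. -/
lemma exists_basis {Λ : AddSubgroup (DS F)} (hΛ : IsOFLattice F Λ) :
    ∃ (ι : Type) (_ : Fintype ι) (b : Module.Basis ι ℝ (DS F)),
      (Submodule.span ℤ (Set.range b)).toAddSubgroup = Λ := by
  obtain ⟨-, hd, hc⟩ := hΛ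
  let L : Submodule ℤ (DS F) := AddSubgroup.toIntSubmodule Λ
  have : DiscreteTopology L := hd
  have : IsZLattice ℝ L := ⟨span_eq_top F⟩
  refine ⟨_, inferInstance, (Module.Free.chooseBasis ℤ L).ofZLatticeBasis ℝ L, ?_⟩
  rw [Module.Basis.ofZLatticeBasis_span]
  rfl

variable {F}
variable {ι : Type} [Fintype ι]

lemma coord_mem {Λ : AddSubgroup (DS F)} {b : Module.Basis ι ℝ (DS F)}
    (hb : (Submodule.span ℤ (Set.range b)).toAddSubgroup = Λ) (z : DS F) :
    z ∈ Λ ↔ ∃ n : ι → ℤ, b.equivFun.symm (intVec n) = z := by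
  subst hb
  rw [Submodule.mem_toAddSubgroup, Module.Basis.mem_span_iff_repr_mem]
  constructor
  · intro h
    choose n hn using h
    refine ⟨n, ?_⟩
    rw [LinearEquiv.symm_apply_eq]
    funext i
    simpa [intVec] using hn i
  · rintro ⟨n, rfl⟩ i
    refine ⟨n i, ?_⟩
    have := congrFun (b.equivFun.apply_symm_apply (intVec n)) i
    rw [Module.Basis.equivFun_apply] at this
    exact this.symm

/-- Lattice points in coordinates. -/
def latEquiv {Λ : AddSubgroup (DS F)} {b : Module.Basis ι ℝ (DS F)}
    (hb : (Submodule.span ℤ (Set.range b)).toAddSubgroup = Λ) : (ι → ℤ) ≃ Λ :=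
  Equiv.ofBijective (fun n => ⟨b.equivFun.symm (intVec n), (coord_mem hb _).2 ⟨n, rfl⟩⟩) <| by
    constructor
    · intro m n h
      have h := b.equivFun.symm.injective (congrArg Subtype.val h)
      funext i
      simpa [intVec] using congrFun h i
    · rintro ⟨z, hz⟩
      obtain ⟨n, rfl⟩ := (coord_mem hb z).1 hz
      exact ⟨n, rfl⟩

/-- The coordinates of `w` with respect to the basis dual to `b` under the pairing. -/
def dualCoord (b : Module.Basis ι ℝ (DS F)) : DS F ≃ₗ[ℝ] (ι → ℝ) :=
  LinearEquiv.ofInjectiveOfFinrankEq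
    (LinearMap.pi fun i => pairL F (b i))
    (by
      rw [← LinearMap.ker_eq_bot, LinearMap.ker_eq_bot']
      intro w hw
      refine eq_zero_of_pair F fun z => ?_
      have h : (pairL F).flip w = 0 := b.ext fun i => congrFun hw i
      exact LinearMap.congr_fun h z)
    (by rw [Module.finrank_eq_card_basis b, Module.finrank_fintype_fun_eq_card])

lemma dualCoord_apply (b : Module.Basis ι ℝ (DS F)) (w : DS F) (i : ι) :
    dualCoord b w i = pair F (b i) w := rfl

lemma pair_coord (b : Module.Basis ι ℝ (DS F)) (x y : ι → ℝ) :
    pair F (b.equivFun.symm x) ((dualCoord b).symm y) = ∑ i, y i * x i := by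
  rw [← pairL_apply, Module.Basis.equivFun_symm_apply, map_sum, LinearMap.sum_apply]
  refine Finset.sum_congr rfl fun i _ => ?_
  rw [map_smul, LinearMap.smul_apply, pairL_apply, ← dualCoord_apply, LinearEquiv.apply_symm_apply,
    smul_eq_mul, mul_comm]

lemma dual_mem {Λ : AddSubgroup (DS F)} {b : Module.Basis ι ℝ (DS F)}
    (hb : (Submodule.span ℤ (Set.range b)).toAddSubgroup = Λ) (w : DS F) :
    w ∈ dualLat F Λ ↔ ∃ m : ι → ℤ, (dualCoord b).symm (intVec m) = w := by
  constructor
  · intro hw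
    have h : ∀ i, ∃ n : ℤ, (n : ℝ) = pair F (b i) w := fun i =>
      (psiD_eq_one_iff F _ _).1 (hw (b i) (hb ▸ Submodule.subset_span (Set.mem_range_self i)))
    choose m hm using h
    refine ⟨m, ?_⟩
    rw [LinearEquiv.symm_apply_eq]
    exact funext hm
  · rintro ⟨m, rfl⟩ l hl
    obtain ⟨n, rfl⟩ := (coord_mem hb l).1 hl
    rw [psiD_eq_one_iff, pair_coord]
    exact ⟨∑ i, m i * n i, by simp [intVec]⟩

/-- Points of the dual lattice in coordinates. -/
def dualEquiv {Λ : AddSubgroup (DS F)} {b : Module.Basis ι ℝ (DS F)}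
    (hb : (Submodule.span ℤ (Set.range b)).toAddSubgroup = Λ) : (ι → ℤ) ≃ dualLat F Λ :=
  Equiv.ofBijective (fun m => ⟨(dualCoord b).symm (intVec m), (dual_mem hb _).2 ⟨m, rfl⟩⟩) <| by
    constructor
    · intro m n h
      have h := (dualCoord b).symm.injective (congrArg Subtype.val h)
      funext i
      simpa [intVec] using congrFun h i
    · rintro ⟨z, hz⟩
      obtain ⟨n, rfl⟩ := (dual_mem hb z).1 hz
      exact ⟨n, rfl⟩

/-- Change of variables to lattice coordinates: the Jacobian factor is the inverse covolume. -/
lemma integral_coord {Λ : AddSubgroup (DS F)} {b : Module.Basis ι ℝ (DS F)}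
    (hb : (Submodule.span ℤ (Set.range b)).toAddSubgroup = Λ) {V : ℝ} (hV0 : 0 ≤ V)
    (hV : HasVol F Λ V) :
    ∃ κ : NNReal, (κ : ℝ) = V⁻¹ ∧
      Measure.map (b.equivFun.symm.toContinuousLinearEquiv) (volume : Measure (ι → ℝ)) =
        κ • measD F := by
  obtain ⟨s, hs, hsV⟩ := hV
  subst hb
  set A := b.equivFun.symm.toContinuousLinearEquiv with hA
  have : Countable (Submodule.span ℤ (Set.range b)).toAddSubgroup := (latEquiv rfl).surjective.countable
  have hfd := (ZSpan.isAddFundamentalDomain' b (measD F)).measure_eq hs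
  rw [hsV] at hfd
  have : (Measure.map A (volume : Measure (ι → ℝ))).IsAddHaarMeasure :=
    A.isAddHaarMeasure_map _
  have huniq := Measure.isAddLeftInvariant_eq_smul (Measure.map A (volume : Measure (ι → ℝ))) (measD F)
  refine ⟨_, ?_, huniq⟩
  set κ := Measure.addHaarScalarFactor (Measure.map A (volume : Measure (ι → ℝ))) (measD F)
  have h1 : Measure.map A (volume : Measure (ι → ℝ)) (ZSpan.fundamentalDomain b) = 1 := by
    rw [Measure.map_apply A.continuous.measurable (ZSpan.fundamentalDomain_measurableSet b)]
    have : A ⁻¹' (ZSpan.fundamentalDomain b) = Set.univ.pi fun _ : ι => Set.Ico (0 : ℝ) 1 := by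
      ext x
      have hx : ∀ i, b.repr (A x) i = x i := fun i =>
        congrFun (b.equivFun.apply_symm_apply x) i
      simp only [ZSpan.mem_fundamentalDomain, hx, Set.mem_preimage, Set.mem_univ_pi]
    rw [this, volume_pi_pi]
    simp
  rw [huniq, Measure.smul_apply, hfd] at h1
  have h2 := congrArg ENNReal.toReal h1
  rw [ENNReal.smul_def, smul_eq_mul, ENNReal.toReal_mul, ENNReal.toReal_ofReal hV0] at h2
  exact eq_inv_of_mul_eq_one_left (by simpa using h2)

end Lattice

/-! ### The theta transformation formula -/

/-- The theta transformation formula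
`Θ(t, Λ) = V(Λ)⁻¹ |N(t)|⁻² Θ(t⁻¹, Λ*)`. -/
theorem statement4 (Λ : AddSubgroup (DS F)) (hΛ : IsOFLattice F Λ) (hnd : Nondeg F Λ)
    (V : ℝ) (hV0 : 0 ≤ V) (hV : HasVol F Λ V) (t : RS F) (ht : t ∈ TF F) :
    ∑' l : Λ, fD F (structureMap F t * (l : DS F)) =
      V⁻¹ * ((normR F t) ^ 2)⁻¹ *
        ∑' m : dualLat F Λ, fD F (structureMap F (Ring.inverse t) * (m : DS F)) := by
  obtain ⟨ι, _, b, hb⟩ := exists_basis F hΛ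
  obtain ⟨κ, hκ, hmap⟩ := integral_coord hb hV0 hV
  have htu : IsUnit t := ht
  have htu' : IsUnit (Ring.inverse t) := htu.ringInverse
  set A := b.equivFun.symm.toContinuousLinearEquiv with hA
  have hAm : MeasurableEmbedding A := A.toHomeomorph.measurableEmbedding
  obtain ⟨c, hc, hdec⟩ := fD_decay F
    ((LinearMap.mulLeft ℝ (structureMap F t)).comp b.equivFun.symm.toLinearMap)
    ((mul_injective F htu).comp b.equivFun.symm.injective)
  obtain ⟨c', hc', hdec'⟩ := fD_decay F
    ((LinearMap.mulLeft ℝ (structureMap F (Ring.inverse t))).comp (dualCoord b).symm.toLinearMap)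
    ((mul_injective F htu').comp (dualCoord b).symm.injective)
  let f : C(ι → ℝ, ℂ) := ⟨fun x => (fD F (structureMap F t * A x) : ℂ),
    Complex.continuous_ofReal.comp
      ((continuous_fD F).comp (continuous_const.mul A.continuous))⟩
  have hf : ∀ x, ‖f x‖ ≤ Real.exp (-c * ‖x‖ ^ 2) := fun x => by
    change ‖(fD F (structureMap F t * A x) : ℂ)‖ ≤ _
    rw [Complex.norm_real, Real.norm_of_nonneg (fD_nonneg F _)]
    exact hdec x
  have hfi : Integrable f := by
    have h : Integrable (fun z => (fD F (structureMap F t * z) : ℂ))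
        (Measure.map A (volume : Measure (ι → ℝ))) := by
      rw [hmap]
      exact (integrable_fD F ht).smul_measure_nnreal
    exact hAm.integrable_map_iff.1 h
  -- the Fourier coefficients of `f` are the values of `f(t⁻¹ ·)` at the dual lattice points
  have hfint : ∀ m : ι → ℤ, ∫ x, f x * Complex.exp (-(2*Real.pi*Complex.I*
        ((∑ i, (m i:ℝ) * x i : ℝ) : ℂ))) =
      ((V⁻¹ * (((normR F t) ^ 2)⁻¹ *
        fD F (structureMap F (Ring.inverse t) * (dualCoord b).symm (intVec m))) : ℝ) : ℂ) := by
    intro m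
    have h := hAm.integral_map (μ := volume) (fun z => (fD F (structureMap F t * z) : ℂ) *
      Complex.exp (-(2*Real.pi*Complex.I*(pair F z ((dualCoord b).symm (intVec m)) : ℂ))))
    rw [hmap, integral_smul_nnreal_measure, fourier_fD F ht] at h
    have e : ∀ x, pair F (A x) ((dualCoord b).symm (intVec m)) = ∑ i, (m i:ℝ) * x i :=
      fun x => pair_coord b x (intVec m)
    simp only [e] at h
    rw [← hκ]
    refine h.symm.trans ?_
    rw [NNReal.smul_def, Complex.real_smul]
    push_cast
    ring
  have hsum' : Summable fun m : ι → ℤ =>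
      fD F (structureMap F (Ring.inverse t) * (dualCoord b).symm (intVec m)) :=
    Summable.of_nonneg_of_le (fun m => fD_nonneg F _) (fun m => hdec' (intVec m))
      (summable_gauss hc')
  have hP := poisson f hc hf hfi (by
    simp only [hfint]
    exact Complex.ofRealCLM.summable ((hsum'.mul_left _).mul_left _))
  simp only [hfint] at hP
  have hL : ∑' l : Λ, fD F (structureMap F t * (l : DS F)) =
      ∑' n : ι → ℤ, fD F (structureMap F t * A (intVec n)) :=
    ((latEquiv hb).tsum_eq fun l : Λ => fD F (structureMap F t * (l : DS F))).symm
  have hR : ∑' m : dualLat F Λ, fD F (structureMap F (Ring.inverse t) * (m : DS F)) =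
      ∑' m : ι → ℤ, fD F (structureMap F (Ring.inverse t) * (dualCoord b).symm (intVec m)) :=
    ((dualEquiv hb).tsum_eq fun m : dualLat F Λ =>
      fD F (structureMap F (Ring.inverse t) * (m : DS F))).symm
  rw [hL, hR, mul_assoc, ← tsum_mul_left, ← tsum_mul_left]
  apply Complex.ofReal_injective
  rw [Complex.ofReal_tsum, Complex.ofReal_tsum]
  exact hP

end Hecke
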